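/- Let G be the hosohedral-type group associated to pairs (m_1,ℓ_1),…,(m_h,ℓ_h), let Δ be the common image of the s_j(0,ℓ_j), and let p, q be nonzero integers. If ρ ∈ G satisfies ρ^p = Δ^q, then there exist j ∈ {1,…,h} and an element σ of the j-th factor subgroup of G with σ^p = Δ^q such that ρ is conjugate to σ in G. -/

import Mathlib

/-- The word `a_{j,i} a_{j,i+1} ⋯ a_{j,i+p-1}` (second indices mod `m j`) in the free group
on the disjoint union of the `ZMod (m j)`. -/
def hosoWord (h : ℕ) (m : Fin h → ℕ) (j : Fin h) (i : ZMod (m j)) (p : ℕ) :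
    FreeGroup (Σ j : Fin h, ZMod (m j)) :=
  ((List.range p).map (fun k => FreeGroup.of ⟨j, i + (k : ZMod (m j))⟩)).prod

/-- The defining relations of the hosohedral-type group associated to the pairs
`(m j, ℓ j)`: the circular relations `s_j(i, ℓ j) = s_j(i+1, ℓ j)` within each factor,
together with the identifications `s_j(0, ℓ j) = s_j'(0, ℓ j')` of the Garside elements. -/
def hosoRels (h : ℕ) (m ℓ : Fin h → ℕ) : Set (FreeGroup (Σ j : Fin h, ZMod (m j))) :=
  { r | (∃ (j : Fin h) (i : ZMod (m j)),
          r = hosoWord h m j i (ℓ j) * (hosoWord h m j (i + 1) (ℓ j))⁻¹) ∨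
        (∃ j j' : Fin h, r = hosoWord h m j 0 (ℓ j) * (hosoWord h m j' 0 (ℓ j'))⁻¹) }

/-- The hosohedral-type group associated to the pairs `(m j, ℓ j)`. -/
abbrev HosoGroup (h : ℕ) (m ℓ : Fin h → ℕ) := PresentedGroup (hosoRels h m ℓ)

/-- The generator `a_{j,i}` of the hosohedral-type group. -/
def hosoGen (h : ℕ) (m ℓ : Fin h → ℕ) (j : Fin h) (i : ZMod (m j)) : HosoGroup h m ℓ :=
  PresentedGroup.of ⟨j, i⟩

/-- The element `s_j(i,p) = a_{j,i} a_{j,i+1} ⋯ a_{j,i+p-1}` of the hosohedral-type group. -/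
def hosoS (h : ℕ) (m ℓ : Fin h → ℕ) (j : Fin h) (i : ZMod (m j)) (p : ℕ) :
    HosoGroup h m ℓ :=
  ((List.range p).map (fun k => hosoGen h m ℓ j (i + (k : ZMod (m j))))).prod

/-- The Garside element `Δ` of the hosohedral-type group, as the image of `s_j(0, ℓ j)`
(this is independent of `j` by the defining relations). -/
def hosoDelta (h : ℕ) (m ℓ : Fin h → ℕ) (j : Fin h) : HosoGroup h m ℓ :=
  hosoS h m ℓ j 0 (ℓ j)

/-- The `j`-th factor subgroup of the hosohedral-type group, generated by the
generators `a_{j,0}, …, a_{j, m_j - 1}`. -/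
def hosoFactor (h : ℕ) (m ℓ : Fin h → ℕ) (j : Fin h) : Subgroup (HosoGroup h m ℓ) :=
  Subgroup.closure (Set.range (hosoGen h m ℓ j))

/-!
The group is the amalgamated product of circular groups over the infinite cyclic group `⟨Δ⟩`. An
element of an amalgamated product having a power with nonzero exponent in the amalgamated subgroup
is conjugate into a factor: up to conjugation its reduced word is cyclically reduced, and the
powers of a cyclically reduced word with at least two letters have reduced words that only get
longer. So `ρ` is conjugate to some `g` in a factor with `g ^ p` in `⟨Δ⟩`. As `g ^ p` is conjugate
to `Δ ^ q`, and a degree homomorphism to `ℚ` is injective on `⟨Δ⟩`, this forces `g ^ p = Δ ^ q`.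
-/

theorem pow_natAbs_mem_iff {G S : Type*} [Group G] [SetLike S G] [SubgroupClass S G] {K : S}
    {g : G} {n : ℤ} : g ^ n.natAbs ∈ K ↔ g ^ n ∈ K := by
  cases n <;> simp

section AmalgamatedProduct

open Monoid PushoutI

variable {ι : Type*} {G : ι → Type*} {H : Type*} [∀ i, Group (G i)] [Group H]
  {φ : ∀ i, H →* G i}

/-- `IsReducedProduct φ n i j x` says that `x` is the product of a reduced word of length `n` in
the amalgamated product `PushoutI φ` whose first letter lies in `G i` and last letter in `G j`:
no letter comes from `H`, and adjacent letters come from different factors. -/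
inductive IsReducedProduct (φ : ∀ i, H →* G i) : ℕ → ι → ι → PushoutI φ → Prop
  | single {i : ι} {g : G i} (hg : g ∉ (φ i).range) : IsReducedProduct φ 1 i i (of i g)
  | cons {n : ℕ} {i j k : ι} {g : G i} {x : PushoutI φ} (hg : g ∉ (φ i).range) (hij : i ≠ j)
      (hx : IsReducedProduct φ n j k x) : IsReducedProduct φ (n + 1) i k (of i g * x)

namespace IsReducedProduct

variable {n n' : ℕ} {i i' j j' k : ι} {x y : PushoutI φ}

theorem exists_word (hx : IsReducedProduct φ n i j x) :
    ∃ w : CoprodI.Word G, Reduced φ w ∧ w.fstIdx = some i ∧ ofCoprodI w.prod = x := by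
  induction hx with
  | @single i g hg =>
    have hg₁ : g ≠ 1 := fun h => hg (h ▸ one_mem _)
    exact ⟨.cons g .empty nofun hg₁, List.forall_mem_singleton.2 hg,
      CoprodI.Word.fstIdx_cons .., by simp⟩
  | @cons _ i _ _ g _ hg hij _ ih =>
    obtain ⟨w, hw, hwi, rfl⟩ := ih
    have hg₁ : g ≠ 1 := fun h => hg (h ▸ one_mem _)
    have hwi' : w.fstIdx ≠ some i := by simpa [hwi] using hij.symm
    exact ⟨.cons g w hwi' hg₁, List.forall_mem_cons.2 ⟨hg, hw⟩,
      CoprodI.Word.fstIdx_cons .., by simp⟩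

theorem notMem_range_base (hφ : ∀ i, Function.Injective (φ i))
    (hx : IsReducedProduct φ n i j x) : x ∉ (base φ).range := by
  obtain ⟨w, hw, hwi, rfl⟩ := hx.exists_word
  intro hmem
  rw [hw.eq_empty_of_mem_range hφ hmem] at hwi
  exact nomatch hwi

theorem base_mul (z : H) (hx : IsReducedProduct φ n i j x) :
    IsReducedProduct φ n i j (base φ z * x) := by
  have hz (g : G i) : φ i z * g ∈ (φ i).range ↔ g ∈ (φ i).range :=
    Subgroup.mul_mem_cancel_left _ ⟨z, rfl⟩
  rw [← of_apply_eq_base φ i]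
  cases hx with
  | single hg =>
    rw [← map_mul]
    exact single ((hz _).not.2 hg)
  | cons hg hij hy =>
    rw [← mul_assoc, ← map_mul]
    exact cons ((hz _).not.2 hg) hij hy

theorem mul_base (z : H) (hx : IsReducedProduct φ n i j x) :
    IsReducedProduct φ n i j (x * base φ z) := by
  induction hx with
  | @single i g hg =>
    have hz : g * φ i z ∈ (φ i).range ↔ g ∈ (φ i).range :=
      Subgroup.mul_mem_cancel_right _ ⟨z, rfl⟩
    rw [← of_apply_eq_base φ i, ← map_mul]
    exact single (hz.not.2 hg)
  | cons hg hij _ ih =>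
    rw [mul_assoc]
    exact cons hg hij ih

theorem mul (hx : IsReducedProduct φ n i j x) (hy : IsReducedProduct φ n' i' j' y)
    (hne : j ≠ i') : IsReducedProduct φ (n + n') i j' (x * y) := by
  induction hx with
  | single hg =>
    rw [add_comm]
    exact cons hg hne hy
  | cons hg hij _ ih =>
    rw [add_right_comm, mul_assoc]
    exact cons hg hij (ih hne)

theorem pow_mul (hx : IsReducedProduct φ n i j x) (hji : j ≠ i)
    (hy : IsReducedProduct φ n' i j' y) (k : ℕ) :
    IsReducedProduct φ (k * n + n') i j' (x ^ k * y) := by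
  induction k with
  | zero => simpa using hy
  | succ k ih =>
    rw [pow_succ', mul_assoc, Nat.succ_mul, Nat.add_comm _ n, add_assoc]
    exact hx.mul ih hji

theorem eq_of_or_eq_mul_of (hx : IsReducedProduct φ n i j x) :
    (n = 1 ∧ i = j ∧ ∃ g : G j, g ∉ (φ j).range ∧ x = of j g) ∨
      ∃ n' k y, ∃ g : G j, n = n' + 1 ∧ IsReducedProduct φ n' i k y ∧ k ≠ j ∧
        g ∉ (φ j).range ∧ x = y * of j g := by
  induction hx with
  | single hg => exact .inl ⟨rfl, rfl, _, hg, rfl⟩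
  | cons hg hij _ ih =>
    obtain ⟨rfl, rfl, g', hg', rfl⟩ | ⟨n', k, y, g', rfl, hy, hk, hg', rfl⟩ := ih
    · exact .inr ⟨1, _, _, g', rfl, single hg, hij, hg', rfl⟩
    · exact .inr ⟨n' + 1, k, _, g', rfl, cons hg hij hy, hk, hg', (mul_assoc ..).symm⟩

theorem of_mul_mul_of_pow {g g' : G i} (hg : g ∉ (φ i).range) (hg' : g' ∉ (φ i).range)
    (hy : IsReducedProduct φ n i' j' y) (hi' : i ≠ i') (hj' : j' ≠ i)
    (hgg' : g' * g ∉ (φ i).range) (k : ℕ) :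
    ∃ n', IsReducedProduct φ n' i i ((of i g * (y * of i g')) ^ (k + 1)) := by
  have hpow : (of i g * (y * of i g')) ^ (k + 1) =
      of i g * ((y * of i (g' * g)) ^ k * (y * of i g')) := by
    rw [pow_succ, ← mul_assoc _ (of i g), mul_pow_mul]
    simp only [map_mul, mul_assoc]
  rw [hpow]
  exact ⟨_, cons hg hi' ((hy.mul (single hgg') hj').pow_mul hi' (hy.mul (single hg') hj') k)⟩

/-- If `x` begins with `g` and ends with `g'`, both in `G i`, then merging the two ends is the key:
for `g' * g ∉ H` the rotated word is cyclically reduced, and otherwise conjugating by `g` leaves a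
shorter word, to which induction applies. -/
theorem pow_or_isConj_of (hx : IsReducedProduct φ n i j x) {k : ℕ} (hk : k ≠ 0) :
    (∃ n', IsReducedProduct φ n' i j (x ^ k)) ∨
      ∃ (l : ι) (g : G l), IsConj x (of l g) ∧ g ^ k ∈ (φ l).range := by
  obtain ⟨k, rfl⟩ := Nat.exists_eq_succ_of_ne_zero hk
  induction n using Nat.strong_induction_on generalizing i j x with
  | _ n ih =>
  by_cases hij : i ≠ j
  · exact .inl ⟨_, pow_succ x k ▸ hx.pow_mul hij.symm hx k⟩
  obtain rfl := not_not.1 hij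
  cases hx with
  | @single i g hg =>
    by_cases hgk : g ^ (k + 1) ∈ (φ i).range
    · exact .inr ⟨i, g, .refl _, hgk⟩
    · exact .inl ⟨1, by simpa only [map_pow] using single hgk⟩
  | @cons _ i _ _ g x hg hij hx =>
    obtain ⟨-, rfl, -⟩ | ⟨n', l, y, g', rfl, hy, hli, hg', rfl⟩ := hx.eq_of_or_eq_mul_of
    · exact absurd rfl hij
    by_cases hgg' : g' * g ∈ (φ i).range
    swap
    · exact .inl (of_mul_mul_of_pow hg hg' hy hij hli hgg' k)
    obtain ⟨z, hz⟩ := hgg'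
    have hconj : of i g * (y * of i g') = of i g * (y * base φ z) * (of i g)⁻¹ := by
      rw [← of_apply_eq_base φ i, hz, map_mul]
      group
    obtain ⟨n', hpow⟩ | ⟨l', a, hya, ha⟩ := ih _ (by lia) (hy.mul_base z)
    · rw [hconj, conj_pow, ← map_inv, mul_assoc]
      exact .inl ⟨_, cons hg hij (hpow.mul (single (inv_mem_iff.not.2 hg)) hli)⟩
    · exact .inr ⟨l', a, (isConj_iff.2 ⟨_, hconj.symm⟩).symm.trans hya, ha⟩

theorem exists_of_mul (hx : IsReducedProduct φ n i j x) (hki : k ≠ i) (g : G k) :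
    ∃ n' i', IsReducedProduct φ n' i' j (of k g * x) := by
  by_cases hg : g ∈ (φ k).range
  · obtain ⟨z, rfl⟩ := hg
    exact ⟨n, i, by simpa only [of_apply_eq_base] using hx.base_mul z⟩
  · exact ⟨n + 1, k, cons hg hki hx⟩

end IsReducedProduct

theorem mem_range_base_or_isReducedProduct (x : PushoutI φ) :
    x ∈ (base φ).range ∨ ∃ n i j, IsReducedProduct φ n i j x := by
  have of_or (i : ι) (g : G i) :
      of i g ∈ (base φ).range ∨ ∃ n i' j, IsReducedProduct φ n i' j (of i g) := by
    by_cases hg : g ∈ (φ i).range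
    · obtain ⟨z, rfl⟩ := hg
      exact .inl ⟨z, (of_apply_eq_base φ i z).symm⟩
    · exact .inr ⟨1, i, i, .single hg⟩
  have of_mul_or {n i j k y} (hy : IsReducedProduct φ n i j y) (hki : k ≠ i) (g : G k) :
      of k g * y ∈ (base φ).range ∨ ∃ n i' j, IsReducedProduct φ n i' j (of k g * y) :=
    let ⟨n', i', hgy⟩ := hy.exists_of_mul hki g
    .inr ⟨n', i', j, hgy⟩
  suffices mul_or : ∀ y : PushoutI φ,
      (y ∈ (base φ).range ∨ ∃ n i j, IsReducedProduct φ n i j y) →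
        x * y ∈ (base φ).range ∨ ∃ n i j, IsReducedProduct φ n i j (x * y) by
    simpa only [mul_one] using mul_or 1 (.inl (one_mem _))
  induction x using PushoutI.induction_on with
  | of i g =>
    rintro _ (⟨z, rfl⟩ | ⟨n, i', j, hy⟩)
    · rw [← of_apply_eq_base φ i, ← map_mul]
      exact of_or i _
    by_cases hii' : i ≠ i'
    · exact of_mul_or hy hii' g
    obtain rfl := not_not.1 hii'
    cases hy with
    | single _ =>
      rw [← map_mul]
      exact of_or i _
    | cons _ hij hy =>
      rw [← mul_assoc, ← map_mul]
      exact of_mul_or hy hij _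
  | base z =>
    rintro y (hy | ⟨n, i, j, hy⟩)
    · exact .inl (mul_mem ⟨z, rfl⟩ hy)
    · exact .inr ⟨n, i, j, hy.base_mul z⟩
  | mul x₁ x₂ ih₁ ih₂ =>
    intro y hy
    simpa only [mul_assoc] using ih₁ _ (ih₂ y hy)

theorem exists_isConj_of_of_pow_mem_range_base [Nonempty ι] (hφ : ∀ i, Function.Injective (φ i))
    {x : PushoutI φ} {n : ℕ} (hn : n ≠ 0) (hx : x ^ n ∈ (base φ).range) :
    ∃ (i : ι) (g : G i), IsConj x (of i g) ∧ g ^ n ∈ (φ i).range := by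
  obtain ⟨z, rfl⟩ | ⟨_, i, j, hred⟩ := mem_range_base_or_isReducedProduct x
  · obtain ⟨i⟩ := ‹Nonempty ι›
    exact ⟨i, φ i z, of_apply_eq_base φ i z ▸ .refl _, pow_mem (MonoidHom.mem_range.2 ⟨z, rfl⟩) n⟩
  · exact (hred.pow_or_isConj_of hn).resolve_left fun ⟨_, hpow⟩ => hpow.notMem_range_base hφ hx

theorem exists_isConj_of_of_zpow_eq_base [Nonempty ι] {M : Type*} [CommMonoid M]
    {f : PushoutI φ →* M} (hf : Function.Injective (f.comp (base φ))) {x : PushoutI φ} {p : ℤ}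
    (hp : p ≠ 0) {z : H} (hx : x ^ p = base φ z) :
    ∃ (i : ι) (g : G i), IsConj x (of i g) ∧ g ^ p = φ i z := by
  have hφ (i : ι) : Function.Injective (φ i) := by
    rw [← of_comp_eq_base i] at hf
    exact hf.of_comp (f := f.comp (of i))
  have hmem : x ^ p ∈ (base φ).range := ⟨z, hx.symm⟩
  obtain ⟨i, g, hconj, hg⟩ := exists_isConj_of_of_pow_mem_range_base hφ
    (Int.natAbs_ne_zero.2 hp) (pow_natAbs_mem_iff.2 hmem)
  obtain ⟨z', hz'⟩ := pow_natAbs_mem_iff.1 hg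
  have hzz' : IsConj (base φ z) (base φ z') := by
    rw [← hx, ← of_apply_eq_base φ i, hz', map_zpow]
    obtain ⟨c, hc⟩ := isConj_iff.1 hconj
    exact isConj_iff.2 ⟨c, by rw [← hc, conj_zpow]⟩
  exact ⟨i, g, hconj, by rw [← hz', hf (isConj_iff_eq.1 (f.map_isConj hzz'))]⟩

end AmalgamatedProduct

section CyclicProd

variable {M N : Type*} [Monoid M] [Monoid N] {n : ℕ}

/-- The product `a i * a (i + 1) * ⋯ * a (i + p - 1)` of `p` consecutive terms of a cyclically
indexed family; it is `hosoWord` and `hosoS` with the family left arbitrary. -/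
def cyclicProd (a : ZMod n → M) (i : ZMod n) (p : ℕ) : M :=
  ((List.range p).map fun k : ℕ => a (i + (k : ZMod n))).prod

theorem map_cyclicProd (f : M →* N) (a : ZMod n → M) (i : ZMod n) (p : ℕ) :
    f (cyclicProd a i p) = cyclicProd (fun k => f (a k)) i p := by
  simp only [cyclicProd, map_list_prod, List.map_map, Function.comp_def]

theorem cyclicProd_const (c : M) (i : ZMod n) (p : ℕ) : cyclicProd (fun _ => c) i p = c ^ p := by
  simp [cyclicProd]

end CyclicProd

/-- The defining relations `s(i, ℓ) = s(i + 1, ℓ)` of the circular group. -/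
def circularRels (n ℓ : ℕ) : Set (FreeGroup (ZMod n)) :=
  {r | ∃ i, r = cyclicProd FreeGroup.of i ℓ * (cyclicProd FreeGroup.of (i + 1) ℓ)⁻¹}

/-- The circular group, with generators indexed by `ZMod n` and relations `s(i, ℓ) = s(i + 1, ℓ)`;
each factor of a hosohedral-type group is one of these. -/
abbrev CircularGroup (n ℓ : ℕ) := PresentedGroup (circularRels n ℓ)

namespace CircularGroup

variable {n ℓ : ℕ} {Γ : Type*} [Group Γ]

/-- The homomorphism out of a circular group given by a family satisfying its relations. -/
def lift (a : ZMod n → Γ) (ha : ∀ i, cyclicProd a i ℓ = cyclicProd a (i + 1) ℓ) :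
    CircularGroup n ℓ →* Γ :=
  PresentedGroup.toGroup (f := a) <| by
    rintro _ ⟨i, rfl⟩
    simp only [map_mul, map_inv, map_cyclicProd, FreeGroup.lift_apply_of]
    rw [ha i, mul_inv_cancel]

@[simp]
theorem lift_of (a : ZMod n → Γ) (ha : ∀ i, cyclicProd a i ℓ = cyclicProd a (i + 1) ℓ)
    (i : ZMod n) : lift a ha (.of i) = a i :=
  PresentedGroup.toGroup.of _

/-- The Garside element `s(0, ℓ)` of a circular group. -/
def delta (n ℓ : ℕ) : CircularGroup n ℓ := cyclicProd .of 0 ℓ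

theorem cyclicProd_of_eq_cyclicProd_of_add_one (i : ZMod n) :
    cyclicProd (.of : ZMod n → CircularGroup n ℓ) i ℓ = cyclicProd .of (i + 1) ℓ := by
  have h := PresentedGroup.mk_eq_mk_of_mul_inv_mem (rels := circularRels n ℓ) ⟨i, rfl⟩
  simp only [map_cyclicProd] at h
  exact h

theorem lift_delta (a : ZMod n → Γ) (ha : ∀ i, cyclicProd a i ℓ = cyclicProd a (i + 1) ℓ) :
    lift a ha (delta n ℓ) = cyclicProd a 0 ℓ := by
  simp only [delta, map_cyclicProd, lift_of]

/-- The degree homomorphism. It is normalized to be `1` on the Garside element (when `ℓ ≠ 0`),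
so that the degrees of the factors of a hosohedral-type group agree on `Δ`. -/
def deg (n ℓ : ℕ) : CircularGroup n ℓ →* Multiplicative ℚ :=
  lift (fun _ => .ofAdd (ℓ : ℚ)⁻¹) fun i => by simp only [cyclicProd_const]

theorem deg_delta (hℓ : ℓ ≠ 0) : deg n ℓ (delta n ℓ) = .ofAdd 1 := by
  have hℓ' : (ℓ : ℚ) ≠ 0 := Nat.cast_ne_zero.2 hℓ
  rw [deg, lift_delta, cyclicProd_const, ← ofAdd_nsmul, nsmul_eq_mul, mul_inv_cancel₀ hℓ']

end CircularGroup

namespace HosoGroup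

open Monoid PushoutI

variable {h : ℕ} {m ℓ : Fin h → ℕ}

theorem hosoDelta_eq_cyclicProd (j : Fin h) :
    hosoDelta h m ℓ j = cyclicProd (hosoGen h m ℓ j) 0 (ℓ j) := by
  -- `hosoS` elaborates with `List.range p` coerced to `List (ZMod (m j))` through the list monad.
  simp only [hosoDelta, hosoS, cyclicProd, List.bind_eq_flatMap, List.pure_def,
    ← List.map_eq_flatMap, List.map_map, Function.comp_def]

theorem map_hosoWord {Γ : Type*} [Group Γ] (f : FreeGroup (Σ j : Fin h, ZMod (m j)) →* Γ)
    (j : Fin h) (i : ZMod (m j)) (p : ℕ) :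
    f (hosoWord h m j i p) = cyclicProd (fun k => f (.of ⟨j, k⟩)) i p :=
  map_cyclicProd f (fun k => .of ⟨j, k⟩) i p

theorem cyclicProd_hosoGen_eq_cyclicProd_hosoGen_add_one (j : Fin h) (i : ZMod (m j)) :
    cyclicProd (hosoGen h m ℓ j) i (ℓ j) = cyclicProd (hosoGen h m ℓ j) (i + 1) (ℓ j) := by
  have hrel := PresentedGroup.mk_eq_mk_of_mul_inv_mem (rels := hosoRels h m ℓ) (.inl ⟨j, i, rfl⟩)
  simp only [map_hosoWord] at hrel
  exact hrel

theorem hosoDelta_eq_hosoDelta (j j' : Fin h) : hosoDelta h m ℓ j = hosoDelta h m ℓ j' := by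
  have hrel := PresentedGroup.mk_eq_mk_of_mul_inv_mem (rels := hosoRels h m ℓ) (.inr ⟨j, j', rfl⟩)
  simp only [map_hosoWord] at hrel
  rw [hosoDelta_eq_cyclicProd, hosoDelta_eq_cyclicProd]
  exact hrel

/-- The map of the amalgamated infinite cyclic group to the `j`-th circular group, sending
the generator to the Garside element. -/
def deltaHom (m ℓ : Fin h → ℕ) (j : Fin h) :
    Multiplicative ℤ →* CircularGroup (m j) (ℓ j) :=
  zpowersHom _ (CircularGroup.delta (m j) (ℓ j))

/-- The canonical homomorphism from a circular group onto the corresponding factor subgroup. -/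
def factorHom (m ℓ : Fin h → ℕ) (j : Fin h) : CircularGroup (m j) (ℓ j) →* HosoGroup h m ℓ :=
  CircularGroup.lift (hosoGen h m ℓ j) (cyclicProd_hosoGen_eq_cyclicProd_hosoGen_add_one j)

@[simp]
theorem factorHom_of (j : Fin h) (i : ZMod (m j)) :
    factorHom m ℓ j (.of i) = hosoGen h m ℓ j i :=
  CircularGroup.lift_of ..

theorem factorHom_mem_hosoFactor (j : Fin h) (g : CircularGroup (m j) (ℓ j)) :
    factorHom m ℓ j g ∈ hosoFactor h m ℓ j := by
  refine PresentedGroup.generated_by _ ((hosoFactor h m ℓ j).comap (factorHom m ℓ j))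
    (fun i => ?_) g
  rw [Subgroup.mem_comap, factorHom_of]
  exact Subgroup.subset_closure ⟨i, rfl⟩

theorem factorHom_delta (j : Fin h) :
    factorHom m ℓ j (CircularGroup.delta (m j) (ℓ j)) = hosoDelta h m ℓ j := by
  rw [factorHom, CircularGroup.lift_delta, hosoDelta_eq_cyclicProd]

theorem of_delta (j : Fin h) :
    of j (CircularGroup.delta (m j) (ℓ j)) = base (deltaHom m ℓ) (.ofAdd 1) := by
  rw [← of_apply_eq_base _ j]
  simp [deltaHom]

/-- The homomorphism to the amalgamated product of the circular groups over `⟨Δ⟩`. -/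
def toPushout (m ℓ : Fin h → ℕ) : HosoGroup h m ℓ →* PushoutI (deltaHom m ℓ) :=
  PresentedGroup.toGroup (f := fun x => of x.1 (.of x.2)) <| by
    rintro _ (⟨j, i, rfl⟩ | ⟨j, j', rfl⟩) <;>
      simp only [map_mul, map_inv, map_hosoWord, FreeGroup.lift_apply_of, mul_inv_eq_one,
        ← map_cyclicProd]
    · rw [CircularGroup.cyclicProd_of_eq_cyclicProd_of_add_one]
    · exact (of_delta j).trans (of_delta j').symm

/-- The homomorphism from the amalgamated product of the circular groups over `⟨Δ⟩`, the generator
of which goes to `Δ` as read off in the `j₀`-th factor. -/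
def ofPushout (m ℓ : Fin h → ℕ) (j₀ : Fin h) : PushoutI (deltaHom m ℓ) →* HosoGroup h m ℓ :=
  PushoutI.lift (factorHom m ℓ) (zpowersHom _ (hosoDelta h m ℓ j₀)) fun j => by
    ext
    simp [deltaHom, factorHom_delta, hosoDelta_eq_hosoDelta j j₀]

@[simp]
theorem toPushout_hosoGen (j : Fin h) (i : ZMod (m j)) :
    toPushout m ℓ (hosoGen h m ℓ j i) = of j (.of i) :=
  PresentedGroup.toGroup.of _

/-- A hosohedral-type group as the amalgamated product of its circular groups over `⟨Δ⟩`. The index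
`j₀` ensures that there is a factor: without any, the amalgamated product is infinite cyclic. -/
def equivPushout (m ℓ : Fin h → ℕ) (j₀ : Fin h) : HosoGroup h m ℓ ≃* PushoutI (deltaHom m ℓ) :=
  (toPushout m ℓ).toMulEquiv (ofPushout m ℓ j₀)
    (PresentedGroup.ext fun ⟨j, i⟩ => by
      change ofPushout m ℓ j₀ (toPushout m ℓ (hosoGen h m ℓ j i)) = hosoGen h m ℓ j i
      simp [ofPushout])
    (by
      have : Nonempty (Fin h) := ⟨j₀⟩
      ext j i
      simp [ofPushout])

theorem equivPushout_hosoDelta (j₀ j : Fin h) :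
    equivPushout m ℓ j₀ (hosoDelta h m ℓ j) = base (deltaHom m ℓ) (.ofAdd 1) := by
  change toPushout m ℓ (hosoDelta h m ℓ j) = _
  simp only [hosoDelta_eq_cyclicProd, ← of_delta j, CircularGroup.delta, map_cyclicProd,
    toPushout_hosoGen]

theorem equivPushout_symm_of (j₀ j : Fin h) (g : CircularGroup (m j) (ℓ j)) :
    (equivPushout m ℓ j₀).symm (of j g) = factorHom m ℓ j g := by
  change ofPushout m ℓ j₀ (of j g) = _
  rw [ofPushout, lift_of]

/-- The degree homomorphism of the amalgamated product, extending those of the factors. -/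
def pushoutDeg (hℓ : ∀ j, ℓ j ≠ 0) : PushoutI (deltaHom m ℓ) →* Multiplicative ℚ :=
  PushoutI.lift (fun j => CircularGroup.deg (m j) (ℓ j))
    (Int.castAddHom ℚ).toMultiplicative fun j => by
      ext
      simp [deltaHom, CircularGroup.deg_delta (hℓ j)]

theorem pushoutDeg_comp_base_injective (hℓ : ∀ j, ℓ j ≠ 0) :
    Function.Injective ((pushoutDeg (m := m) hℓ).comp (base (deltaHom m ℓ))) := by
  have hbase : (pushoutDeg (m := m) hℓ).comp (base (deltaHom m ℓ)) =
      (Int.castAddHom ℚ).toMultiplicative := by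
    ext
    simp [pushoutDeg]
  rw [hbase]
  exact Int.cast_injective (α := ℚ)

end HosoGroup

/-- Every `(p,q)`-periodic element of a hosohedral-type group is conjugate to a
`(p,q)`-periodic element of one of the factor subgroups. -/
theorem periodic_hoso_in_factor (h : ℕ) (m ℓ : Fin h → ℕ) (hh : 0 < h)
    (hm : ∀ j, 0 < m j) (hℓ : ∀ j, 0 < ℓ j) (hne : ∀ j, (m j, ℓ j) ≠ (1, 1))
    (p q : ℤ) (hp : p ≠ 0) (hq : q ≠ 0) (ρ : HosoGroup h m ℓ)
    (hρ : ρ ^ p = (hosoDelta h m ℓ ⟨0, hh⟩) ^ q) :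
    ∃ (j : Fin h) (σ : HosoGroup h m ℓ), σ ∈ hosoFactor h m ℓ j ∧
      σ ^ p = (hosoDelta h m ℓ ⟨0, hh⟩) ^ q ∧ IsConj ρ σ := by
  have : Nonempty (Fin h) := ⟨⟨0, hh⟩⟩
  let e := HosoGroup.equivPushout m ℓ ⟨0, hh⟩
  have heΔ : e (hosoDelta h m ℓ ⟨0, hh⟩ ^ q) =
      Monoid.PushoutI.base (HosoGroup.deltaHom m ℓ) (.ofAdd 1 ^ q) := by
    rw [map_zpow, map_zpow, HosoGroup.equivPushout_hosoDelta]
  obtain ⟨j, g, hconj, hg⟩ := exists_isConj_of_of_zpow_eq_base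
    (HosoGroup.pushoutDeg_comp_base_injective fun j => (hℓ j).ne') hp
    (show e ρ ^ p = _ by rw [← map_zpow, hρ, heΔ])
  have hσ : e.symm (Monoid.PushoutI.of j g) = HosoGroup.factorHom m ℓ j g :=
    HosoGroup.equivPushout_symm_of ..
  refine ⟨j, HosoGroup.factorHom m ℓ j g, HosoGroup.factorHom_mem_hosoFactor j g, ?_, ?_⟩
  · rw [← hσ, ← map_zpow, ← map_zpow, hg, Monoid.PushoutI.of_apply_eq_base, ← heΔ,
      e.symm_apply_apply]
  · simpa only [MulEquiv.coe_toMonoidHom, e.symm_apply_apply, hσ] using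
      e.symm.toMonoidHom.map_isConj hconj
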